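/- arXiv:2207.02459 — 3 statements merged into one kernel-verified Lean document; each statement's English description precedes it below -/
import Mathlib

section
/- For all z, λ ∈ k^×, there is a unique Ĥ_d^ext-module structure on M̂_z extending the Ĥ_d-action and satisfying ρ m_j = λ z^{δ_{j,0}} m_{j+1} for all j (indices modulo d). Moreover, on the resulting module M̂_{z,λ}, the element ρ^d acts as scalar multiplication by λ^d z. -/
/-!
The only freedom in extending `α` to `Ĥ_d^ext` is the choice of an invertible operator `R` for `ρ`
with `R T_i R⁻¹ = T_{i+1}`. The prescribed formula for `ρ m_j` defines a weighted cyclic shift of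
the basis with unit weights `c_j`, hence an invertible operator (`rhoEquiv`), and the conjugation
relation amounts to the equivariance `R (b_i m_j) = b_{i+1} (R m_j)` (`rhoEquiv_GLact`): the twist
by `z` in the weight `c_0` is exactly what moves the twisted matrix entries
`(i, j) = (1, 0), (0, 1)` of the affine generators to the untwisted ones, and back. The relations
among the `T_i` alone already hold in `Ĥ_d`. Uniqueness holds because `ρ⁻¹` must act as the
inverse of `ρ`. Finally `R ^ n` sends `m_j` to `(∏_{k<n} c_{j+k}) m_{j+n}`, and for `n = d` the
product runs once over all residues, giving `λ ^ d z`.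
-/

/-! Hecke algebras of finite and (extended) affine type A, and evaluation maps. -/

set_option synthInstance.maxHeartbeats 1000000
set_option maxHeartbeats 2000000

noncomputable section

open scoped Classical

namespace PaperEval

/-- The ground field `k = ℂ(q)`. -/
abbrev kk : Type := RatFunc ℂ

/-- The parameter `q ∈ k`. -/
def qq : kk := RatFunc.X

/-- Generators of the extended affine Hecke algebra:
`T i` for `i : ZMod d`, together with `ρ` and `ρ⁻¹`. -/
inductive ExtGen (d : ℕ) : Type
  | T : ZMod d → ExtGen d
  | rho : ExtGen d
  | rhoInv : ExtGen d

/-- The free `k`-algebra on the generators of `Ĥ_d^ext`. -/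
abbrev FE (d : ℕ) : Type := FreeAlgebra kk (ExtGen d)

def fT (d : ℕ) (i : ZMod d) : FE d := FreeAlgebra.ι kk (ExtGen.T i)
def fR (d : ℕ) : FE d := FreeAlgebra.ι kk ExtGen.rho
def fRi (d : ℕ) : FE d := FreeAlgebra.ι kk ExtGen.rhoInv

/-- The defining relations of the extended affine Hecke algebra `Ĥ_d^ext`. -/
inductive ExtRel (d : ℕ) : FE d → FE d → Prop
  | quad (i : ZMod d) :
      ExtRel d ((fT d i + algebraMap kk (FE d) qq) * (fT d i - algebraMap kk (FE d) qq⁻¹)) 0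
  | comm (i j : ZMod d) : i ≠ j + 1 → j ≠ i + 1 →
      ExtRel d (fT d i * fT d j) (fT d j * fT d i)
  | braid (i : ZMod d) :
      ExtRel d (fT d i * fT d (i + 1) * fT d i) (fT d (i + 1) * fT d i * fT d (i + 1))
  | rhoMulInv : ExtRel d (fR d * fRi d) 1
  | rhoInvMul : ExtRel d (fRi d * fR d) 1
  | rhoConj (i : ZMod d) : ExtRel d (fR d * fT d i * fRi d) (fT d (i + 1))

/-- The extended affine Hecke algebra `Ĥ_d^ext`. -/
abbrev ExtHecke (d : ℕ) : Type := RingQuot (ExtRel d)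

/-- The generator `T_i` of `Ĥ_d^ext`. -/
def eT (d : ℕ) (i : ZMod d) : ExtHecke d := RingQuot.mkAlgHom kk (ExtRel d) (fT d i)

/-- The generator `ρ` of `Ĥ_d^ext`. -/
def eR (d : ℕ) : ExtHecke d := RingQuot.mkAlgHom kk (ExtRel d) (fR d)

/-- The generator `ρ⁻¹` of `Ĥ_d^ext`. -/
def eRi (d : ℕ) : ExtHecke d := RingQuot.mkAlgHom kk (ExtRel d) (fRi d)

/-- `T_i⁻¹ = T_i + q - q⁻¹` in `Ĥ_d^ext`. -/
def eTinv (d : ℕ) (i : ZMod d) : ExtHecke d :=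
  eT d i + algebraMap kk (ExtHecke d) (qq - qq⁻¹)

/-- The affine Hecke algebra `Ĥ_d`, i.e. the `k`-subalgebra of `Ĥ_d^ext`
generated by `T_0, …, T_{d-1}`. -/
def AffHecke (d : ℕ) : Subalgebra kk (ExtHecke d) :=
  Algebra.adjoin kk (Set.range (eT d))

/-- The free `k`-algebra used to present the finite Hecke algebra;
only the generators `gT i` with `1 ≤ i ≤ d - 1` survive in the quotient. -/
abbrev FH : Type := FreeAlgebra kk ℕ

def gT (i : ℕ) : FH := FreeAlgebra.ι kk i

/-- Defining relations of the finite Hecke algebra `H_d` (with the superfluous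
generators `gT i`, for `i = 0` or `i ≥ d`, set to zero). -/
inductive HRel (d : ℕ) : FH → FH → Prop
  | out (i : ℕ) : ¬(1 ≤ i ∧ i < d) → HRel d (gT i) 0
  | quad (i : ℕ) : 1 ≤ i → i < d →
      HRel d ((gT i + algebraMap kk FH qq) * (gT i - algebraMap kk FH qq⁻¹)) 0
  | comm (i j : ℕ) : 1 ≤ i → i < d → 1 ≤ j → j < d → i + 1 < j ∨ j + 1 < i →
      HRel d (gT i * gT j) (gT j * gT i)
  | braid (i : ℕ) : 1 ≤ i → i + 1 < d →
      HRel d (gT i * gT (i + 1) * gT i) (gT (i + 1) * gT i * gT (i + 1))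

/-- The finite Hecke algebra `H_d`. -/
abbrev Hecke (d : ℕ) : Type := RingQuot (HRel d)

/-- The generator `T_i` of `H_d`. -/
def hT (d : ℕ) (i : ℕ) : Hecke d := RingQuot.mkAlgHom kk (HRel d) (gT i)

/-- `T_i⁻¹ = T_i + q - q⁻¹` in `H_d`. -/
def hTinv (d : ℕ) (i : ℕ) : Hecke d := hT d i + algebraMap kk (Hecke d) (qq - qq⁻¹)

/-- `T_1 T_2 ⋯ T_{d-1}` in `H_d`. -/
def hAsc (d : ℕ) : Hecke d := (((List.range (d - 1)).map fun i => hT d (i + 1))).prod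

/-- `T_1⁻¹ T_2⁻¹ ⋯ T_{d-1}⁻¹` in `H_d`. -/
def hInvAsc (d : ℕ) : Hecke d := (((List.range (d - 1)).map fun i => hTinv d (i + 1))).prod

/-- The defining property of the evaluation map `ev_a : Ĥ_d^ext → H_d`:
it sends `T_i ↦ T_i` for `1 ≤ i ≤ d - 1` and `ρ ↦ a ⬝ T_1⁻¹ T_2⁻¹ ⋯ T_{d-1}⁻¹`. -/
def IsEv (d : ℕ) (a : kk) (f : ExtHecke d →ₐ[kk] Hecke d) : Prop :=
  (∀ i : ℕ, 1 ≤ i → i < d → f (eT d (i : ZMod d)) = hT d i) ∧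
    f (eR d) = a • hInvAsc d

/-- The defining property of the evaluation map `ev'_a : Ĥ_d^ext → H_d`:
it sends `T_i ↦ T_i` for `1 ≤ i ≤ d - 1` and `ρ ↦ a ⬝ T_1 T_2 ⋯ T_{d-1}`. -/
def IsEv' (d : ℕ) (a : kk) (f : ExtHecke d →ₐ[kk] Hecke d) : Prop :=
  (∀ i : ℕ, 1 ≤ i → i < d → f (eT d (i : ZMod d)) = hT d i) ∧
    f (eR d) = a • hAsc d


/-- The underlying `k`-vector space of the Graham–Lehrer cell module,
with basis `m_0, …, m_{d-1}` indexed by `ZMod d`. -/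
abbrev VV (d : ℕ) : Type := ZMod d → kk

/-- The basis vector `m_j`. -/
def em (d : ℕ) (j : ZMod d) : VV d := Pi.single j 1

/-- The value of `b_i m_j` in the Graham–Lehrer cell module `M̂_z`:
`b_i m_j = (q + q⁻¹) m_i` if `j ≡ i`; `b_1 m_0 = z m_1`; `b_0 m_1 = z⁻¹ m_0`;
`b_i m_j = m_i` if `j ≡ i ± 1` and `(i,j) ∉ {(1,0),(0,1)}`; and `0` otherwise. -/
def GLact (d : ℕ) (z : kk) (i j : ZMod d) : VV d :=
  if j = i then (qq + qq⁻¹) • em d i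
  else if i = 1 ∧ j = 0 then z • em d 1
  else if i = 0 ∧ j = 1 then z⁻¹ • em d 0
  else if j = i + 1 ∨ j = i - 1 then em d i
  else 0

/-- `b_i = T_i + q` as an element of the affine Hecke algebra `Ĥ_d ⊆ Ĥ_d^ext`. -/
def ab (d : ℕ) (i : ZMod d) : AffHecke d :=
  (⟨eT d i, Algebra.subset_adjoin ⟨i, rfl⟩⟩ : AffHecke d) + algebraMap kk (AffHecke d) qq

/-- A Graham–Lehrer `Ĥ_d^ext`-module structure on `VV d` with parameters `z, λ`:
`b_i m_j` as in `M̂_z` and `ρ m_j = λ z^{δ_{j,0}} m_{j+1}`.  This is the module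
`M̂_{z,λ}`, encoded by the corresponding algebra map into `End_k(VV d)`. -/
def IsGL (d : ℕ) (z l : kk) (β : ExtHecke d →ₐ[kk] Module.End kk (VV d)) : Prop :=
  (∀ i j : ZMod d,
      β (eT d i + algebraMap kk (ExtHecke d) qq) (em d j) = GLact d z i j) ∧
    (∀ j : ZMod d, β (eR d) (em d j) = (if j = 0 then z * l else l) • em d (j + 1))

/-- `n_+ = ∑_{k=1}^{d} (-q)^{-k} m_k` (with `m_d = m_0`). -/
def nPlus (d : ℕ) : VV d := ∑ k ∈ Finset.Icc 1 d, ((-qq) ^ k)⁻¹ • em d (k : ZMod d)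

/-- `n_- = ∑_{k=1}^{d} (-q)^{k} m_k` (with `m_d = m_0`). -/
def nMinus (d : ℕ) : VV d := ∑ k ∈ Finset.Icc 1 d, ((-qq) ^ k) • em d (k : ZMod d)
/-! ### The weighted cyclic shift -/

/-- The weight `c_j = λ z^{δ_{j,0}}`, as a unit, of the weighted cyclic shift `m_j ↦ c_j m_{j+1}`. -/
def rhoCoef (d : ℕ) (z l : kkˣ) (j : ZMod d) : kkˣ := if j = 0 then z * l else l

lemma rhoCoef_val (d : ℕ) (z l : kkˣ) (j : ZMod d) :
    ((rhoCoef d z l j : kkˣ) : kk) = if j = 0 then (z : kk) * (l : kk) else (l : kk) := by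
  unfold rhoCoef
  split_ifs <;> simp

/-- The weighted cyclic shift `m_j ↦ λ z^{δ_{j,0}} m_{j+1}`, written on coordinates, as a linear
automorphism of `VV d`. -/
def rhoEquiv (d : ℕ) (z l : kkˣ) : VV d ≃ₗ[kk] VV d where
  toFun v := fun i => (rhoCoef d z l (i - 1) : kk) * v (i - 1)
  invFun v := fun i => ((rhoCoef d z l i)⁻¹ : kkˣ) * v (i + 1)
  map_add' v w := by
    funext i
    simp [mul_add]
  map_smul' a v := by
    funext i
    simp only [Pi.smul_apply, smul_eq_mul, RingHom.id_apply]
    ring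
  left_inv v := by
    funext i
    simp only [add_sub_cancel_right, Units.inv_mul_cancel_left]
  right_inv v := by
    funext i
    simp only [sub_add_cancel, Units.mul_inv_cancel_left]

lemma rhoEquiv_em (d : ℕ) (z l : kkˣ) (j : ZMod d) :
    rhoEquiv d z l (em d j) = (rhoCoef d z l j : kk) • em d (j + 1) := by
  funext i
  change (rhoCoef d z l (i - 1) : kk) * em d j (i - 1) = (rhoCoef d z l j : kk) * em d (j + 1) i
  by_cases h : i = j + 1
  · subst h
    simp [em]
  · have h' : i - 1 ≠ j := fun h' => h (by rw [← h', sub_add_cancel])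
    simp [em, h, h']

lemma end_ext {d : ℕ} (hd : 3 ≤ d) {f g : Module.End kk (VV d)}
    (h : ∀ j, f (em d j) = g (em d j)) : f = g := by
  have : NeZero d := ⟨by omega⟩
  refine (Pi.basisFun kk (ZMod d)).ext fun j => ?_
  simpa [em, Pi.basisFun_apply] using h j

/-- Equivariance of the Graham–Lehrer action under the weighted shift:
`R (b_i m_j) = b_{i+1} (R m_j)`. -/
lemma rhoEquiv_GLact {d : ℕ} (hd : 3 ≤ d) (z l : kkˣ) (i j : ZMod d) :
    rhoEquiv d z l (GLact d (z : kk) i j) =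
      (rhoCoef d z l j : kk) • GLact d (z : kk) (i + 1) (j + 1) := by
  -- `1` and `2` are nonzero in `ZMod d` because `d ≥ 3`, so the neighbours `i ± 1` are distinct
  -- from each other and from `i`.
  have h1 : (1 : ZMod d) ≠ 0 := by
    intro h
    have := (ZMod.natCast_eq_zero_iff 1 d).1 (by exact_mod_cast h)
    have := Nat.le_of_dvd (by norm_num) this
    omega
  have h2 : (2 : ZMod d) ≠ 0 := by
    intro h
    have := (ZMod.natCast_eq_zero_iff 2 d).1 (by exact_mod_cast h)
    have := Nat.le_of_dvd (by norm_num) this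
    omega
  have hz : (z : kk) ≠ 0 := z.ne_zero
  by_cases hji : j = i
  · subst hji
    simp only [GLact, if_true, map_smul, rhoEquiv_em]
    rw [smul_comm]
  by_cases hup : j = i + 1
  · subst hup
    by_cases hi0 : i = 0
    · have e1 : ¬((0 : ZMod d) = 1) := fun h => h1 h.symm
      have e2 : ¬((1 : ZMod d) + 1 = 1) := fun h => h1 (by linear_combination h)
      have e3 : ¬((1 : ZMod d) + 1 = 0) := fun h => h2 (by linear_combination h)
      subst hi0
      simp [GLact, rhoEquiv_em, rhoCoef_val, h1, e1, e2, e3, smul_smul, hz]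
    · by_cases hi1 : i + 1 = 0
      · have hi : i = -1 := by linear_combination hi1
        have e1 : ¬((0 : ZMod d) = -1) := fun h => h1 (by linear_combination h)
        have e2 : ¬((-1 : ZMod d) = 1) := fun h => h2 (by linear_combination -h)
        have hzl : (z : kk) * l * (z : kk)⁻¹ = l := by field_simp
        subst hi
        simp [GLact, rhoEquiv_em, rhoCoef_val, h1, e1, e2, smul_smul, hzl]
      · have e1 : ¬(i + 1 + 1 = i + 1) := fun h => h1 (by linear_combination h)
        simp [GLact, rhoEquiv_em, rhoCoef_val, h1, e1, hi0, hi1]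
  by_cases hdn : j = i - 1
  · obtain rfl : i = j + 1 := by linear_combination -hdn
    by_cases hj0 : j = 0
    · subst hj0
      have e1 : ¬((0 : ZMod d) = 1) := fun h => h1 h.symm
      have e2 : ¬((1 : ZMod d) = 1 + 1) := fun h => h1 (by linear_combination -h)
      have e3 : ¬((1 : ZMod d) + 1 = 0) := fun h => h2 (by linear_combination h)
      simp [GLact, rhoEquiv_em, rhoCoef_val, h1, e1, e2, e3, smul_smul]
    · by_cases hj1 : j + 1 = 0
      · have hj : j = -1 := by linear_combination hj1
        have e1 : ¬((-1 : ZMod d) = 0) := fun h => h1 (by linear_combination -h)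
        have e2 : ¬((-1 : ZMod d) = 1) := fun h => h2 (by linear_combination -h)
        have e3 : ¬((0 : ZMod d) = 1) := fun h => h1 h.symm
        subst hj
        simp [GLact, rhoEquiv_em, rhoCoef_val, e1, e2, e3, smul_smul, mul_comm]
      · have e1 : ¬(j + 1 = j + 1 + 1) := fun h => h1 (by linear_combination -h)
        have e2 : ¬(j = j + 1) := fun h => h1 (by linear_combination -h)
        simp [GLact, rhoEquiv_em, rhoCoef_val, e1, e2, hj0, hj1]
  · have a1 : ¬(i = 1 ∧ j = 0) := fun h => hdn (by rw [h.1, h.2]; ring)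
    have a2 : ¬(i = 0 ∧ j = 1) := fun h => hup (by rw [h.1, h.2]; ring)
    have b0 : ¬(j + 1 = i + 1) := fun h => hji (by linear_combination h)
    have b1 : ¬(i + 1 = 1 ∧ j + 1 = 0) := fun h => hdn (by linear_combination h.2 - h.1)
    have b2 : ¬(i + 1 = 0 ∧ j + 1 = 1) := fun h => hup (by linear_combination h.2 - h.1)
    have b3 : ¬(j + 1 = i + 1 + 1 ∨ j + 1 = i + 1 - 1) := by
      rintro (h | h)
      · exact hup (by linear_combination h)
      · exact hdn (by linear_combination h)
    rw [GLact, if_neg hji, if_neg a1, if_neg a2, if_neg (not_or.2 ⟨hup, hdn⟩), GLact, if_neg b0,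
      if_neg b1, if_neg b2, if_neg b3, map_zero, smul_zero]

/-! ### Existence and uniqueness of the extension -/

/-- The generator `T_i` of `Ĥ_d`, viewed inside the subalgebra. -/
def aT (d : ℕ) (i : ZMod d) : AffHecke d := ⟨eT d i, Algebra.subset_adjoin ⟨i, rfl⟩⟩

lemma aT_quad (d : ℕ) (i : ZMod d) :
    (aT d i + algebraMap kk (AffHecke d) qq) * (aT d i - algebraMap kk (AffHecke d) qq⁻¹) = 0 := by
  apply Subtype.ext
  have h := RingQuot.mkAlgHom_rel kk (ExtRel.quad (d := d) i)
  rw [map_mul, map_add, map_sub, map_zero, AlgHom.commutes, AlgHom.commutes] at h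
  exact h

lemma aT_comm (d : ℕ) {i j : ZMod d} (h1 : i ≠ j + 1) (h2 : j ≠ i + 1) :
    aT d i * aT d j = aT d j * aT d i := by
  apply Subtype.ext
  have h := RingQuot.mkAlgHom_rel kk (ExtRel.comm (d := d) i j h1 h2)
  simp only [map_mul] at h
  exact h

lemma aT_braid (d : ℕ) (i : ZMod d) :
    aT d i * aT d (i + 1) * aT d i = aT d (i + 1) * aT d i * aT d (i + 1) := by
  apply Subtype.ext
  have h := RingQuot.mkAlgHom_rel kk (ExtRel.braid (d := d) i)
  simp only [map_mul] at h
  exact h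

/-- The weighted shift `R` satisfies `R T_i = T_{i+1} R`; this is `rhoEquiv_GLact` after subtracting
the central scalar `q` from `b_i`. -/
lemma rhoEquiv_aT {d : ℕ} (hd : 3 ≤ d) (z l : kkˣ)
    (α : (AffHecke d) →ₐ[kk] Module.End kk (VV d))
    (hα : ∀ i j : ZMod d, α (ab d i) (em d j) = GLact d (z : kk) i j) (i : ZMod d) :
    (rhoEquiv d z l).toLinearMap * α (aT d i) =
      α (aT d (i + 1)) * (rhoEquiv d z l).toLinearMap := by
  have key : (rhoEquiv d z l).toLinearMap * α (ab d i) =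
      α (ab d (i + 1)) * (rhoEquiv d z l).toLinearMap := by
    refine end_ext hd fun j => ?_
    change rhoEquiv d z l (α (ab d i) (em d j)) = α (ab d (i + 1)) (rhoEquiv d z l (em d j))
    rw [hα, rhoEquiv_GLact hd, rhoEquiv_em, map_smul, hα]
  have hab : ∀ i, α (ab d i) = α (aT d i) + algebraMap kk (Module.End kk (VV d)) qq := by
    intro i
    rw [← AlgHom.commutes α qq, ← map_add]
    rfl
  rw [hab, hab, mul_add, add_mul, Algebra.commutes qq] at key
  exact add_right_cancel key

/-- The images of the generators under the extension of `α`. -/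
def extFun (d : ℕ) (z l : kkˣ) (α : (AffHecke d) →ₐ[kk] Module.End kk (VV d)) :
    ExtGen d → Module.End kk (VV d)
  | ExtGen.T i => α (aT d i)
  | ExtGen.rho => (rhoEquiv d z l).toLinearMap
  | ExtGen.rhoInv => (rhoEquiv d z l).symm.toLinearMap

lemma rho_mul_symm (d : ℕ) (z l : kkˣ) :
    ((rhoEquiv d z l).toLinearMap * (rhoEquiv d z l).symm.toLinearMap :
      Module.End kk (VV d)) = 1 :=
  LinearMap.ext fun v => (rhoEquiv d z l).apply_symm_apply v

lemma symm_mul_rho (d : ℕ) (z l : kkˣ) :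
    ((rhoEquiv d z l).symm.toLinearMap * (rhoEquiv d z l).toLinearMap :
      Module.End kk (VV d)) = 1 :=
  LinearMap.ext fun v => (rhoEquiv d z l).symm_apply_apply v

lemma extFun_rel {d : ℕ} (hd : 3 ≤ d) (z l : kkˣ)
    (α : (AffHecke d) →ₐ[kk] Module.End kk (VV d))
    (hα : ∀ i j : ZMod d, α (ab d i) (em d j) = GLact d (z : kk) i j)
    ⦃x y : FE d⦄ (h : ExtRel d x y) :
    FreeAlgebra.lift kk (extFun d z l α) x = FreeAlgebra.lift kk (extFun d z l α) y := by
  cases h with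
  | quad i =>
    have h := congrArg α (aT_quad d i)
    have hsub : α (aT d i - algebraMap kk (AffHecke d) qq⁻¹) =
        α (aT d i) - algebraMap kk (Module.End kk (VV d)) qq⁻¹ := by
      rw [eq_sub_iff_add_eq, ← AlgHom.commutes α, ← map_add]
      exact congrArg α (Subtype.ext (sub_add_cancel (eT d i) _))
    rw [map_mul, map_add, map_zero, AlgHom.commutes, hsub] at h
    simpa only [map_mul, map_add, map_sub, map_zero, AlgHom.commutes, fT,
      FreeAlgebra.lift_ι_apply, extFun] using h
  | comm i j h1 h2 =>
    have h := congrArg α (aT_comm d h1 h2)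
    simpa only [map_mul, fT, FreeAlgebra.lift_ι_apply, extFun] using h
  | braid i =>
    have h := congrArg α (aT_braid d i)
    simpa only [map_mul, fT, FreeAlgebra.lift_ι_apply, extFun] using h
  | rhoMulInv =>
    simpa only [map_mul, map_one, fR, fRi, FreeAlgebra.lift_ι_apply, extFun] using
      rho_mul_symm d z l
  | rhoInvMul =>
    simpa only [map_mul, map_one, fR, fRi, FreeAlgebra.lift_ι_apply, extFun] using
      symm_mul_rho d z l
  | rhoConj i =>
    simp only [map_mul, fT, fR, fRi, FreeAlgebra.lift_ι_apply, extFun]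
    rw [rhoEquiv_aT hd z l α hα, mul_assoc, rho_mul_symm, mul_one]

lemma eR_mul_eRi (d : ℕ) : eR d * eRi d = 1 := by
  have h := RingQuot.mkAlgHom_rel kk (ExtRel.rhoMulInv (d := d))
  rw [map_mul, map_one] at h
  exact h

lemma eRi_mul_eR (d : ℕ) : eRi d * eR d = 1 := by
  have h := RingQuot.mkAlgHom_rel kk (ExtRel.rhoInvMul (d := d))
  rw [map_mul, map_one] at h
  exact h

/-- An algebra map out of `Ĥ_d^ext` is determined by the images of the `T_i` and of `ρ`. -/
lemma extHecke_hom_ext {d : ℕ} {A : Type*} [Ring A] [Algebra kk A] {β γ : ExtHecke d →ₐ[kk] A}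
    (hT : ∀ i, β (eT d i) = γ (eT d i)) (hR : β (eR d) = γ (eR d)) : β = γ := by
  -- Both `β ρ⁻¹` and `γ ρ⁻¹` are inverse to `β ρ = γ ρ`.
  have hRi : β (eRi d) = γ (eRi d) := by
    refine left_inv_eq_right_inv (a := β (eR d)) ?_ ?_
    · rw [← map_mul, eRi_mul_eR, map_one]
    · rw [hR, ← map_mul, eR_mul_eRi, map_one]
  refine RingQuot.ringQuot_ext' kk β γ (FreeAlgebra.hom_ext (funext fun x => ?_))
  cases x with
  | T i => exact hT i
  | rho => exact hR
  | rhoInv => exact hRi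

/-! ### The action of `ρ ^ d` -/

/-- Iterates of a weighted cyclic shift. -/
lemma shift_pow_em {d : ℕ} {R : Module.End kk (VV d)} {c : ZMod d → kk}
    (hR : ∀ j, R (em d j) = c j • em d (j + 1)) (n : ℕ) (j : ZMod d) :
    (R ^ n) (em d j) = (∏ k ∈ Finset.range n, c (j + k)) • em d (j + n) := by
  induction n with
  | zero => simp
  | succ n ih =>
    rw [pow_succ', Module.End.mul_apply, ih, map_smul, hR, smul_smul, Finset.prod_range_succ,
      Nat.cast_succ, add_assoc]

/-- A product over `d` consecutive residues runs exactly once over `ZMod d`. -/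
lemma prod_range_zmod {d : ℕ} [NeZero d] (c : ZMod d → kk) (j : ZMod d) :
    ∏ k ∈ Finset.range d, c (j + k) = ∏ x, c x := by
  rw [← Equiv.prod_comp (Equiv.addLeft j) c]
  refine Finset.prod_bij (fun k _ => (k : ZMod d)) (fun _ _ => Finset.mem_univ _) ?_ ?_ ?_
  · intro a ha b hb h
    rw [Finset.mem_range] at ha hb
    have := congrArg ZMod.val h
    simpa only [ZMod.val_natCast_of_lt ha, ZMod.val_natCast_of_lt hb] using this
  · intro x _
    exact ⟨x.val, Finset.mem_range.2 x.val_lt, ZMod.natCast_rightInverse x⟩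
  · intro a _
    rfl

lemma prod_coef {d : ℕ} [NeZero d] (z l : kk) :
    ∏ x : ZMod d, (if x = 0 then z * l else l) = l ^ d * z := by
  have h : ∀ x : ZMod d, (if x = 0 then z * l else l) = (if x = 0 then z else 1) * l := by
    intro x
    split_ifs <;> simp
  simp_rw [h]
  rw [Finset.prod_mul_distrib, Finset.prod_ite_eq', Finset.prod_const, Finset.card_univ,
    ZMod.card, if_pos (Finset.mem_univ _), mul_comm]

/-- for all `z, λ ∈ k^×` there is a unique `Ĥ_d^ext`-module structure on
`M̂_z` extending the `Ĥ_d`-action and satisfying `ρ m_j = λ z^{δ_{j,0}} m_{j+1}`;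
moreover `ρ^d` acts on `M̂_{z,λ}` as scalar multiplication by `λ^d z`. -/
theorem statement6 (d : ℕ) (hd : 3 ≤ d) (z l : kkˣ)
    (α : (AffHecke d) →ₐ[kk] Module.End kk (VV d))
    (hα : ∀ i j : ZMod d, α (ab d i) (em d j) = GLact d (z : kk) i j) :
    (∃! β : ExtHecke d →ₐ[kk] Module.End kk (VV d),
        (∀ x : AffHecke d, β (x : ExtHecke d) = α x) ∧
          (∀ j : ZMod d,
            β (eR d) (em d j) = (if j = 0 then (z : kk) * (l : kk) else (l : kk)) • em d (j + 1))) ∧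
    (∀ β : ExtHecke d →ₐ[kk] Module.End kk (VV d),
        ((∀ x : AffHecke d, β (x : ExtHecke d) = α x) ∧
          (∀ j : ZMod d,
            β (eR d) (em d j) = (if j = 0 then (z : kk) * (l : kk) else (l : kk)) • em d (j + 1))) →
        β (eR d ^ d) = algebraMap kk (Module.End kk (VV d)) ((l : kk) ^ d * (z : kk))) := by
  have : NeZero d := ⟨by omega⟩
  refine ⟨?_, ?_⟩
  · refine ⟨RingQuot.liftAlgHom kk ⟨FreeAlgebra.lift kk (extFun d z l α),
      fun _ _ h => extFun_rel hd z l α hα h⟩, ⟨?_, ?_⟩, ?_⟩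
    · set β := RingQuot.liftAlgHom kk ⟨FreeAlgebra.lift kk (extFun d z l α),
        fun _ _ h => extFun_rel hd z l α hα h⟩ with hβ
      have h : β.comp (AffHecke d).val = α := by
        refine AlgHom.adjoin_ext ?_
        rintro _ ⟨i, rfl⟩
        change β (eT d i) = α (aT d i)
        rw [hβ, eT, RingQuot.liftAlgHom_mkAlgHom_apply, fT, FreeAlgebra.lift_ι_apply]
        rfl
      exact fun x => DFunLike.congr_fun h x
    · intro j
      rw [eR, RingQuot.liftAlgHom_mkAlgHom_apply, fR, FreeAlgebra.lift_ι_apply, ← rhoCoef_val]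
      exact rhoEquiv_em d z l j
    · rintro γ ⟨hγ, hγR⟩
      refine extHecke_hom_ext (fun i => ?_) (end_ext hd fun j => ?_)
      · rw [eT, RingQuot.liftAlgHom_mkAlgHom_apply, fT, FreeAlgebra.lift_ι_apply]
        exact hγ (aT d i)
      · rw [hγR, eR, RingQuot.liftAlgHom_mkAlgHom_apply, fR, FreeAlgebra.lift_ι_apply,
          ← rhoCoef_val]
        exact (rhoEquiv_em d z l j).symm
  · rintro β ⟨-, hβ⟩
    refine end_ext hd fun j => ?_
    rw [map_pow, shift_pow_em (c := fun j => if j = 0 then (z : kk) * l else l) hβ,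
      prod_range_zmod (fun j => if j = 0 then (z : kk) * l else l), prod_coef, ZMod.natCast_self, add_zero,
      Module.algebraMap_end_apply]

end PaperEval
end
end

section
/- For all z, λ ∈ k^×, all m ∈ M̂_{z,λ}, all m' ∈ M̂_{z^{-1},λ^{-1}} and all i ∈ {0, …, d−1}: ⟨T_i m, m'⟩ = ⟨m, T_i m'⟩ and ⟨ρ m, m'⟩ = ⟨m, ρ^{-1} m'⟩. Consequently, rad(⟨·,·⟩) := {m ∈ M̂_{z,λ} : ⟨m, m'⟩ = 0 for all m' ∈ M̂_{z^{-1},λ^{-1}}} is an Ĥ_d^ext-submodule of M̂_{z,λ}. -/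
/-!
On basis vectors both actions and the form are governed by one matrix `C = glFormC d z`:
`b_i m_j = C j i • m_i` in `M̂_{z,λ}` and `b_i m_k = C i k • m_i` in `M̂_{z⁻¹,λ⁻¹}`. Hence
`⟨b_i m_j, m_k⟩ = C j i * C i k = ⟨m_j, b_i m_k⟩`, and `T_i = b_i - q` is self-adjoint.
The adjointness of `ρ` and `ρ⁻¹` is the invariance `⟨ρ m, ρ m'⟩ = ⟨m, m'⟩`, which compares the
entries `C (i+1) (j+1)` and `C i j`; here `d ≥ 3` makes `0`, `1`, `2` distinct in `ZMod d`
(`glFormC_shift`). It follows that every element of the algebra has an adjoint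
(`exists_adjoint`), so the radical is stable.
-/

/-! Hecke algebras of finite and (extended) affine type A, and evaluation maps. -/

set_option synthInstance.maxHeartbeats 1000000
set_option maxHeartbeats 2000000

noncomputable section

open scoped Classical

namespace PaperEval

/-- The values of the Graham–Lehrer bilinear form on basis vectors. -/
def glFormC (d : ℕ) (z : kk) (i j : ZMod d) : kk :=
  if i = j then qq + qq⁻¹
  else if i = 0 ∧ j = 1 then z
  else if i = 1 ∧ j = 0 then z⁻¹
  else if i = j + 1 ∨ j = i + 1 then 1
  else 0

/-- The Graham–Lehrer bilinear form `⟨·,·⟩ : M̂_{z,λ} × M̂_{z⁻¹,λ⁻¹} → k`. -/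
def glB (d : ℕ) [NeZero d] (z : kk) (v w : VV d) : kk :=
  ∑ i : ZMod d, ∑ j : ZMod d, v i * w j * glFormC d z i j

/-- The Graham–Lehrer form `glB` as a bilinear map. -/
def glL (d : ℕ) [NeZero d] (z : kk) : VV d →ₗ[kk] VV d →ₗ[kk] kk :=
  Matrix.toLinearMap₂' kk (Matrix.of (glFormC d z))

lemma glL_apply (d : ℕ) [NeZero d] (z : kk) (v w : VV d) : glL d z v w = glB d z v w := by
  simp [glL, glB, Matrix.toLinearMap₂'_apply, mul_assoc]

lemma glL_em (d : ℕ) [NeZero d] (z : kk) (i j : ZMod d) :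
    glL d z (em d i) (em d j) = glFormC d z i j := by
  simp [glL_apply, glB, em, Pi.single_apply]

lemma glL_ext (d : ℕ) [NeZero d] {f g : VV d →ₗ[kk] VV d →ₗ[kk] kk}
    (h : ∀ i j, f (em d i) (em d j) = g (em d i) (em d j)) : f = g :=
  LinearMap.ext_basis (Pi.basisFun kk (ZMod d)) (Pi.basisFun kk (ZMod d)) fun i j => by
    simpa [em, Pi.basisFun_apply] using h i j

lemma one_ne_zero_zmod {d : ℕ} (hd : 3 ≤ d) : (1 : ZMod d) ≠ 0 := by
  have : Fact (1 < d) := ⟨by omega⟩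
  exact one_ne_zero

lemma two_ne_zero_zmod {d : ℕ} (hd : 3 ≤ d) : (1 + 1 : ZMod d) ≠ 0 := by
  intro h
  have h2 : ((2 : ℕ) : ZMod d) = 0 := by
    rw [← h]; norm_num
  have := Nat.le_of_dvd (by norm_num) ((ZMod.natCast_eq_zero_iff 2 d).1 h2)
  omega

lemma GLact_eq {d : ℕ} (hd : 3 ≤ d) (z : kk) (i j : ZMod d) :
    GLact d z i j = glFormC d z j i • em d i := by
  have h1 := one_ne_zero_zmod hd
  have h : j = i - 1 ↔ i = j + 1 := by
    rw [eq_sub_iff_add_eq, eq_comm]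
  unfold GLact glFormC
  simp only [h]
  split_ifs <;> simp_all

/-- Transposing the Gram matrix inverts the parameter `z`. -/
lemma glFormC_inv {d : ℕ} (hd : 3 ≤ d) (z : kk) (i j : ZMod d) :
    glFormC d z⁻¹ j i = glFormC d z i j := by
  have h1 := one_ne_zero_zmod hd
  unfold glFormC
  rw [inv_inv]
  split_ifs <;> grind

/-- The form is invariant under the twisted rotation `ρ`, on basis vectors. -/
lemma glFormC_shift {d : ℕ} (hd : 3 ≤ d) (z : kk) (hz : z ≠ 0) (i j : ZMod d) :
    (if i = 0 then z else 1) * (if j = 0 then z⁻¹ else 1) * glFormC d z (i + 1) (j + 1)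
      = glFormC d z i j := by
  have h1 := one_ne_zero_zmod hd
  have h2 := two_ne_zero_zmod hd
  have e1 : i + 1 = 1 ↔ i = 0 := by simp
  have e2 : j + 1 = 1 ↔ j = 0 := by simp
  unfold glFormC
  simp only [add_left_inj, e1, e2]
  split_ifs <;> grind

lemma glB_adj_T {d : ℕ} [NeZero d] (hd : 3 ≤ d) {z l l' : kk}
    {β β' : ExtHecke d →ₐ[kk] Module.End kk (VV d)}
    (hβ : IsGL d z l β) (hβ' : IsGL d z⁻¹ l' β') (i : ZMod d) (m m' : VV d) :
    glB d z (β (eT d i) m) m' = glB d z m (β' (eT d i) m') := by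
  have key : (glL d z).comp (β (eT d i + algebraMap kk (ExtHecke d) qq))
      = (glL d z).compl₂ (β' (eT d i + algebraMap kk (ExtHecke d) qq)) := by
    refine glL_ext d fun j k => ?_
    rw [LinearMap.comp_apply, LinearMap.compl₂_apply, hβ.1, hβ'.1, GLact_eq hd, GLact_eq hd,
      glFormC_inv hd]
    simp only [map_smul, LinearMap.smul_apply, glL_em, smul_eq_mul]
    ring
  have h := LinearMap.congr_fun₂ key m m'
  simpa [← glL_apply, Module.algebraMap_end_apply] using h

lemma glB_rho_rho {d : ℕ} [NeZero d] (hd : 3 ≤ d) {z l : kk} (hz : z ≠ 0) (hl : l ≠ 0)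
    {β β' : ExtHecke d →ₐ[kk] Module.End kk (VV d)}
    (hβ : IsGL d z l β) (hβ' : IsGL d z⁻¹ l⁻¹ β') (m m' : VV d) :
    glB d z (β (eR d) m) (β' (eR d) m') = glB d z m m' := by
  have key : (glL d z).compl₁₂ (β (eR d)) (β' (eR d)) = glL d z := by
    refine glL_ext d fun i j => ?_
    rw [LinearMap.compl₁₂_apply, hβ.2, hβ'.2]
    simp only [map_smul, LinearMap.smul_apply, glL_em, smul_eq_mul]
    rw [← glFormC_shift hd z hz i j]
    split_ifs <;> field_simp
  simpa [← glL_apply] using LinearMap.congr_fun₂ key m m'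

lemma apply_eR_eRi {d : ℕ} (β : ExtHecke d →ₐ[kk] Module.End kk (VV d)) (m : VV d) :
    β (eR d) (β (eRi d) m) = m := by
  rw [← Module.End.mul_apply, ← map_mul, eR_mul_eRi, map_one, Module.End.one_apply]

/-- If the generators have adjoints with respect to the form, so does every element of
`Ĥ_d^ext`. -/
lemma exists_adjoint {d : ℕ} [NeZero d] {z : kk}
    {β β' : ExtHecke d →ₐ[kk] Module.End kk (VV d)}
    (hT : ∀ i m m', glB d z (β (eT d i) m) m' = glB d z m (β' (eT d i) m'))
    (hR : ∀ m m', glB d z (β (eR d) m) m' = glB d z m (β' (eRi d) m'))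
    (hRi : ∀ m m', glB d z (β (eRi d) m) m' = glB d z m (β' (eR d) m'))
    (x : ExtHecke d) :
    ∃ y : ExtHecke d, ∀ m m', glB d z (β x m) m' = glB d z m (β' y m') := by
  obtain ⟨a, rfl⟩ := RingQuot.mkAlgHom_surjective kk (ExtRel d) x
  simp only [← glL_apply] at *
  induction a using FreeAlgebra.induction with
  | grade0 r =>
    exact ⟨algebraMap kk _ r, fun m m' => by simp [Module.algebraMap_end_apply]⟩
  | grade1 g =>
    cases g with
    | T i => exact ⟨_, hT i⟩
    | rho => exact ⟨_, hR⟩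
    | rhoInv => exact ⟨_, hRi⟩
  | mul a b ha hb =>
    obtain ⟨a', ha⟩ := ha
    obtain ⟨b', hb⟩ := hb
    exact ⟨b' * a', fun m m' => by
      rw [map_mul, map_mul, map_mul, Module.End.mul_apply, Module.End.mul_apply, ha, hb]⟩
  | add a b ha hb =>
    obtain ⟨a', ha⟩ := ha
    obtain ⟨b', hb⟩ := hb
    exact ⟨a' + b', fun m m' => by simp [ha, hb]⟩

/-- the Graham–Lehrer form satisfies `⟨T_i m, m'⟩ = ⟨m, T_i m'⟩` and
`⟨ρ m, m'⟩ = ⟨m, ρ⁻¹ m'⟩`; consequently its radical is an `Ĥ_d^ext`-submodule of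
`M̂_{z,λ}`. -/
theorem statement7 (d : ℕ) [NeZero d] (hd : 3 ≤ d) (z l : kkˣ)
    (β β' : ExtHecke d →ₐ[kk] Module.End kk (VV d))
    (hβ : IsGL d (z : kk) (l : kk) β) (hβ' : IsGL d (z : kk)⁻¹ (l : kk)⁻¹ β') :
    (∀ (i : ZMod d) (m m' : VV d),
        glB d (z : kk) (β (eT d i) m) m' = glB d (z : kk) m (β' (eT d i) m')) ∧
    (∀ m m' : VV d,
        glB d (z : kk) (β (eR d) m) m' = glB d (z : kk) m (β' (eRi d) m')) ∧
    (∀ x : ExtHecke d, ∀ m : VV d,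
        (∀ m' : VV d, glB d (z : kk) m m' = 0) →
        ∀ m' : VV d, glB d (z : kk) (β x m) m' = 0) := by
  have hT := glB_adj_T hd hβ hβ'
  have hinv := glB_rho_rho hd z.ne_zero l.ne_zero hβ hβ'
  have hR : ∀ m m' : VV d,
      glB d (z : kk) (β (eR d) m) m' = glB d (z : kk) m (β' (eRi d) m') := fun m m' => by
    rw [← hinv m, apply_eR_eRi]
  have hRi : ∀ m m' : VV d,
      glB d (z : kk) (β (eRi d) m) m' = glB d (z : kk) m (β' (eR d) m') := fun m m' => by
    rw [← hinv, apply_eR_eRi]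
  refine ⟨hT, hR, fun x m hm m' => ?_⟩
  obtain ⟨y, hy⟩ := exists_adjoint hT hR hRi x
  rw [hy, hm]

end PaperEval
end
end

section
/- For every λ ∈ k^×, with z = (−q)^d the form ⟨·,·⟩ : M̂^+_{d,λ} × M̂^−_{d,λ} → k satisfies ⟨n_+, m'⟩ = 0 for all m' ∈ M̂^−_{d,λ} and ⟨m, n_−⟩ = 0 for all m ∈ M̂^+_{d,λ}; hence it descends to a k-bilinear pairing L̂^+_{d,λ} × L̂^−_{d,λ} → k, and this induced pairing is non-degenerate (a perfect pairing). -/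
/-!
The radicals of the form are computed by one change of variables. For `p = (-q)^{∓1}` let
`n_p = ∑_{k=1}^{d} p^k m_k`; then `n_+ = n_p` for `p = (-q)⁻¹` and `n_- = n_p` for `p = -q`. Since
`⟨m_i, m_j⟩_z = ⟨m_j, m_i⟩_{z⁻¹}`, both statements about radicals concern the column sums
`∑_i v_i ⟨m_i, m_j⟩_z` with `z = p^{-d}`. The Gram matrix is a periodic tridiagonal matrix
(this uses `d ≥ 3`), and the twist `z` at the edge `0 — 1` is exactly absorbed by the coordinates of
`n_p`: writing `v = w · n_p` coordinatewise, the `j`-th column sum is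
`(n_p)_j (p (w_{j+1} - w_j) - p⁻¹ (w_j - w_{j-1}))`, because `q + q⁻¹ = -(p + p⁻¹)`
(`sum_mul_glFormC`). For `w = 1` this vanishes, so `n_p` is in the radical. Conversely, if all these
vanish, the differences `w_{j+1} - w_j` are multiplied by `p⁻²` at each step around the cycle
`ℤ/d`; as `p^{2d} ≠ 1` they are zero, so `w` is constant and `v` is a multiple of `n_p`. Hence the
left and right radicals are exactly the lines of `n_+` and `n_-`, and the form descends to a perfect
pairing of the quotients.
-/

/-! Hecke algebras of finite and (extended) affine type A, and evaluation maps. -/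

set_option synthInstance.maxHeartbeats 1000000
set_option maxHeartbeats 2000000

noncomputable section

open scoped Classical

namespace PaperEval

/-- The underlying `k`-vector space of the simple `H_d`-module `M_d`,
with basis `m_1, …, m_{d-1}`. -/
abbrev WW (d : ℕ) : Type := {i : ℕ // 1 ≤ i ∧ i < d} → kk

/-- The basis vector `m_i` of `M_d` (zero if `i` is out of range). -/
def wm (d : ℕ) (i : ℕ) : WW d := fun x => if (x : ℕ) = i then 1 else 0

/-- The value of `b_i m_j` in `M_d`: `(q+q⁻¹) m_i` if `j = i`, `m_i` if `j = i ± 1`,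
and `0` otherwise. -/
def Mact (d : ℕ) (i j : ℕ) : WW d :=
  if j = i then (qq + qq⁻¹) • wm d i
  else if j = i + 1 ∨ i = j + 1 then wm d i
  else 0

/-- The `H_d`-module structure `M_d`, encoded by the corresponding algebra map
into `End_k(WW d)`: the generators `b_i = T_i + q` act on the basis by `Mact`. -/
def IsMd (d : ℕ) (α : Hecke d →ₐ[kk] Module.End kk (WW d)) : Prop :=
  ∀ i j : ℕ, 1 ≤ i → i < d → 1 ≤ j → j < d →
    α (hT d i + algebraMap kk (Hecke d) qq) (wm d j) = Mact d i j
/-- The line spanned by `n_+`. -/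
def NPlus (d : ℕ) : Submodule kk (VV d) := Submodule.span kk {nPlus d}

/-- The quotient module `L̂⁺ = M̂⁺/(k·n_+)`. -/
abbrev LPlus (d : ℕ) : Type := VV d ⧸ NPlus d

/-- The canonical projection `M̂⁺ → L̂⁺`. -/
def mkP (d : ℕ) : VV d →ₗ[kk] LPlus d := (NPlus d).mkQ

/-- The line spanned by `n_-`. -/
def NMinus (d : ℕ) : Submodule kk (VV d) := Submodule.span kk {nMinus d}

/-- The quotient module `L̂⁻ = M̂⁻/(k·n_-)`. -/
abbrev LMinus (d : ℕ) : Type := VV d ⧸ NMinus d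

/-- The canonical projection `M̂⁻ → L̂⁻`. -/
def mkM (d : ℕ) : VV d →ₗ[kk] LMinus d := (NMinus d).mkQ
/-- The vector `n_p = ∑_{k=1}^{d} p^k m_k` (with `m_d = m_0`), which specialises to `n_±` at
`p = (-q)^{∓1}`. -/
def nVec (d : ℕ) (p : kk) : VV d := ∑ k ∈ Finset.Icc 1 d, p ^ k • em d (k : ZMod d)

lemma nPlus_eq (d : ℕ) : nPlus d = nVec d (-qq)⁻¹ := by
  simp [nPlus, nVec, inv_pow]

lemma nMinus_eq (d : ℕ) : nMinus d = nVec d (-qq) := rfl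

lemma nVec_apply (d : ℕ) (p : kk) (k : ℕ) (h1 : 1 ≤ k) (hk : k ≤ d) :
    nVec d p (k : ZMod d) = p ^ k := by
  unfold nVec em
  rw [Finset.sum_apply, Finset.sum_eq_single k]
  · simp
  · intro b hb hbk
    rw [Finset.mem_Icc] at hb
    have : (k : ZMod d) ≠ (b : ZMod d) := by
      intro h
      replace h : ((k : ℤ) : ZMod d) = ((b : ℤ) : ZMod d) := by exact_mod_cast h
      rw [ZMod.intCast_eq_intCast_iff_dvd_sub] at h
      -- two representatives in `{1, …, d}` differ by less than `d` in absolute value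
      have := Int.eq_zero_of_abs_lt_dvd h (by rw [abs_lt]; omega)
      omega
    simp [this]
  · intro h
    exact absurd (Finset.mem_Icc.2 ⟨h1, hk⟩) h

lemma exists_rep (d : ℕ) [NeZero d] (j : ZMod d) : ∃ k : ℕ, 1 ≤ k ∧ k ≤ d ∧ (k : ZMod d) = j := by
  by_cases hj : j = 0
  · exact ⟨d, Nat.one_le_iff_ne_zero.2 (NeZero.ne d), le_rfl, by simp [hj]⟩
  · refine ⟨j.val, ?_, (ZMod.val_lt j).le, by simp⟩
    rw [Nat.one_le_iff_ne_zero]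
    simpa using hj

lemma nVec_ne_zero (d : ℕ) [NeZero d] {p : kk} (hp : p ≠ 0) (j : ZMod d) : nVec d p j ≠ 0 := by
  obtain ⟨k, h1, h2, rfl⟩ := exists_rep d j
  rw [nVec_apply d p k h1 h2]
  exact pow_ne_zero _ hp

/-- The entry `⟨m_i, m_{i+1}⟩` of the Gram matrix, also equal to `⟨m_{i+1}, m_i⟩` at `z⁻¹`. -/
def edge (d : ℕ) (z : kk) (i : ZMod d) : kk := if i = 0 then z else 1

/-- The coordinates of `n_p` are geometric around the cycle, up to the twist at the edge `0 — 1`. -/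
lemma nVec_succ (d : ℕ) [NeZero d] (p : kk) (j : ZMod d) :
    nVec d p (j + 1) * edge d (p ^ d) j = p * nVec d p j := by
  have hd : 1 ≤ d := Nat.one_le_iff_ne_zero.2 (NeZero.ne d)
  by_cases hj : j = 0
  · subst hj
    have h0 := nVec_apply d p d hd le_rfl
    have h1 := nVec_apply d p 1 le_rfl hd
    simp only [CharP.cast_eq_zero, Nat.cast_one] at h0 h1
    simp [edge, h0, h1]
  · have hv : j.val ≠ 0 := by simpa using hj
    have hlt := ZMod.val_lt j
    have h0 := nVec_apply d p j.val (by omega) hlt.le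
    have h1 := nVec_apply d p (j.val + 1) (by omega) hlt
    push_cast at h1
    rw [ZMod.natCast_zmod_val] at h0 h1
    rw [h0, h1, edge, if_neg hj, pow_succ]
    ring

lemma two_ne (d : ℕ) (hd : 3 ≤ d) : (1 : ZMod d) ≠ 0 ∧ (1 + 1 : ZMod d) ≠ 0 := by
  constructor
  · intro h
    have : ((1 : ℕ) : ZMod d) = 0 := by simpa using h
    rw [ZMod.natCast_eq_zero_iff] at this
    have := Nat.le_of_dvd (by omega) this
    omega
  · intro h
    have : ((2 : ℕ) : ZMod d) = 0 := by rw [← h]; norm_num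
    rw [ZMod.natCast_eq_zero_iff] at this
    have := Nat.le_of_dvd (by omega) this
    omega

/-- For `d ≥ 3` the Gram matrix is periodic tridiagonal with three distinct (cyclic) diagonals. -/
lemma glFormC_eq (d : ℕ) (hd : 3 ≤ d) (z : kk) (i j : ZMod d) :
    glFormC d z i j = (if i = j then qq + qq⁻¹ else 0) + (if i = j - 1 then edge d z (j - 1) else 0)
      + (if i = j + 1 then edge d z⁻¹ j else 0) := by
  obtain ⟨h1, h2⟩ := two_ne d hd
  unfold glFormC edge
  by_cases ha : i = j
  · subst ha
    have e1 : i ≠ i - 1 := fun h => h1 (by linear_combination h)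
    have e2 : i ≠ i + 1 := fun h => h1 (by linear_combination -h)
    simp [e1, e2]
  by_cases hb : i = j - 1
  · subst hb
    have e1 : j - 1 ≠ j + 1 := fun h => h2 (by linear_combination -h)
    have e2 : ¬ (j - 1 = 1 ∧ j = 0) := fun ⟨h, h'⟩ => h2 (by linear_combination h' - h)
    have e3 : (j - 1 = 0 ∧ j = 1) ↔ j - 1 = 0 :=
      ⟨fun h => h.1, fun h => ⟨h, by linear_combination h⟩⟩
    simp only [ha, e1, e2, e3, if_false, if_true]
    simp
  by_cases hc : i = j + 1
  · subst hc
    have e2 : ¬ (j + 1 = 0 ∧ j = 1) := fun ⟨h, h'⟩ => h2 (by linear_combination h - h')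
    have e3 : (j + 1 = 1 ∧ j = 0) ↔ j = 0 :=
      ⟨fun h => h.2, fun h => ⟨by linear_combination h, h⟩⟩
    simp only [ha, hb, e2, e3, if_false, if_true]
    simp
  · have e1 : ¬ (i = 0 ∧ j = 1) := fun ⟨h, h'⟩ => hb (by linear_combination h - h')
    have e2 : ¬ (i = 1 ∧ j = 0) := fun ⟨h, h'⟩ => hc (by linear_combination h - h')
    have e3 : ¬ (i = j + 1 ∨ j = i + 1) := by
      rintro (h | h)
      · exact hc h
      · exact hb (by linear_combination -h)
    rw [if_neg ha, if_neg e1, if_neg e2, if_neg e3, if_neg ha, if_neg hb, if_neg hc, add_zero, add_zero]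

lemma glFormC_symm (d : ℕ) (hd : 3 ≤ d) (z : kk) (i j : ZMod d) :
    glFormC d z i j = glFormC d z⁻¹ j i := by
  obtain ⟨h1, h2⟩ := two_ne d hd
  unfold glFormC
  by_cases hij : i = j
  · simp [hij]
  · have hji : ¬ j = i := fun h => hij h.symm
    by_cases ha : i = 0 ∧ j = 1
    · simp [ha.1, ha.2, h1, h1.symm]
    by_cases hb : i = 1 ∧ j = 0
    · simp [hb.1, hb.2, h1, h1.symm]
    have ha' : ¬ (j = 1 ∧ i = 0) := fun h => ha ⟨h.2, h.1⟩
    have hb' : ¬ (j = 0 ∧ i = 1) := fun h => hb ⟨h.2, h.1⟩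
    simp only [hij, hji, ha, hb, ha', hb', if_false, or_comm]

/-- In the coordinates `w` with `v = w · n_p`, the Gram matrix at `z = p^{-d}` becomes a
translation-invariant second-difference operator on the cycle. -/
lemma sum_mul_glFormC (d : ℕ) [NeZero d] (hd : 3 ≤ d) {p : kk} (hp : p ≠ 0)
    (hpq : p + p⁻¹ = -(qq + qq⁻¹)) (w : VV d) (j : ZMod d) :
    ∑ i, (w i * nVec d p i) * glFormC d (p ^ d)⁻¹ i j
      = nVec d p j * (p * (w (j + 1) - w j) - p⁻¹ * (w j - w (j - 1))) := by
  simp only [glFormC_eq d hd, mul_add, Finset.sum_add_distrib, mul_ite, mul_zero,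
    Finset.sum_ite_eq', Finset.mem_univ, if_true, inv_inv]
  have e1 := nVec_succ d p j
  have e2 := nVec_succ d p (j - 1)
  rw [sub_add_cancel] at e2
  have e3 : edge d (p ^ d) (j - 1) * edge d (p ^ d)⁻¹ (j - 1) = 1 := by
    unfold edge
    split_ifs
    · exact mul_inv_cancel₀ (pow_ne_zero _ hp)
    · simp
  have e4 : nVec d p (j - 1) * edge d (p ^ d)⁻¹ (j - 1) = p⁻¹ * nVec d p j := by
    rw [eq_inv_mul_iff_mul_eq₀ hp, ← mul_assoc, ← e2, mul_assoc, e3, mul_one]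
  linear_combination w (j - 1) * e4 + w (j + 1) * e1 + (w j * nVec d p j) * hpq

lemma nVec_radical (d : ℕ) [NeZero d] (hd : 3 ≤ d) {p : kk} (hp : p ≠ 0)
    (hpq : p + p⁻¹ = -(qq + qq⁻¹)) (j : ZMod d) :
    ∑ i, nVec d p i * glFormC d (p ^ d)⁻¹ i j = 0 := by
  simpa using sum_mul_glFormC d hd hp hpq (fun _ => 1) j

/-- A function on `ℤ/d` scaled by `t` under translation vanishes unless `t^d = 1`. -/
lemma cyc_zero (d : ℕ) {t : kk} (ht : t ^ d ≠ 1) (D : ZMod d → kk)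
    (h : ∀ j, D (j + 1) = t * D j) (j : ZMod d) : D j = 0 := by
  have key : ∀ n : ℕ, D (j + n) = t ^ n * D j := by
    intro n
    induction n with
    | zero => simp
    | succ n ih =>
      push_cast
      rw [← add_assoc, h, ih, pow_succ]
      ring
  have hd := key d
  rw [CharP.cast_eq_zero, add_zero] at hd
  have : (t ^ d - 1) * D j = 0 := by linear_combination -hd
  exact (mul_eq_zero.1 this).resolve_left (sub_ne_zero.2 ht)

lemma mem_span_of_radical (d : ℕ) [NeZero d] (hd : 3 ≤ d) {p : kk} (hp : p ≠ 0)
    (hpq : p + p⁻¹ = -(qq + qq⁻¹)) (hpd : p ^ (2 * d) ≠ 1) (v : VV d)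
    (hv : ∀ j, ∑ i, v i * glFormC d (p ^ d)⁻¹ i j = 0) :
    v ∈ Submodule.span kk {nVec d p} := by
  set w : VV d := fun i => v i / nVec d p i with hw
  have hvw : ∀ i, v i = w i * nVec d p i := fun i =>
    (div_mul_cancel₀ _ (nVec_ne_zero d hp i)).symm
  simp only [hvw, sum_mul_glFormC d hd hp hpq] at hv
  have hstep : ∀ j, w (j + 1 + 1) - w (j + 1) = (p ^ 2)⁻¹ * (w (j + 1) - w j) := by
    intro j
    have h := (mul_eq_zero.1 (hv (j + 1))).resolve_left (nVec_ne_zero d hp _)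
    rw [add_sub_cancel_right, sub_eq_zero] at h
    rw [eq_inv_mul_iff_mul_eq₀ (pow_ne_zero _ hp), pow_two, mul_assoc, h, mul_inv_cancel_left₀ hp]
  have hD := cyc_zero d (t := (p ^ 2)⁻¹) (by rwa [inv_pow, ← pow_mul, Ne, inv_eq_one])
    (fun j => w (j + 1) - w j) hstep
  have hconst : ∀ j, w j = w 0 := by
    intro j
    have : ∀ n : ℕ, w (n : ZMod d) = w 0 := by
      intro n
      induction n with
      | zero => simp
      | succ n ih => rw [Nat.cast_succ, sub_eq_zero.1 (hD n), ih]
    simpa using this j.val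
  rw [Submodule.mem_span_singleton]
  refine ⟨w 0, funext fun i => ?_⟩
  rw [Pi.smul_apply, smul_eq_mul, hvw i, hconst i]

lemma qq_ne_zero : qq ≠ 0 := RatFunc.X_ne_zero

lemma qq_pow_ne_one (n : ℕ) (hn : n ≠ 0) : qq ^ n ≠ 1 := by
  intro h
  unfold qq at h
  rw [← RatFunc.algebraMap_X, ← map_pow, ← map_one (algebraMap (Polynomial ℂ) (RatFunc ℂ))] at h
  have h' := congrArg Polynomial.natDegree (RatFunc.algebraMap_injective ℂ h)
  simp at h'
  exact hn h'

lemma glB_left (d : ℕ) [NeZero d] (z : kk) (v w : VV d) :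
    glB d z v w = ∑ j, w j * ∑ i, v i * glFormC d z i j := by
  unfold glB
  rw [Finset.sum_comm]
  simp only [Finset.mul_sum]
  exact Finset.sum_congr rfl fun j _ => Finset.sum_congr rfl fun i _ => by ring

lemma glB_swap (d : ℕ) [NeZero d] (hd : 3 ≤ d) (z : kk) (v w : VV d) :
    glB d z v w = glB d z⁻¹ w v := by
  unfold glB
  rw [Finset.sum_comm]
  refine Finset.sum_congr rfl fun j _ => Finset.sum_congr rfl fun i _ => ?_
  rw [glFormC_symm d hd z]
  ring

lemma glB_em (d : ℕ) [NeZero d] (z : kk) (v : VV d) (j : ZMod d) :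
    glB d z v (em d j) = ∑ i, v i * glFormC d z i j := by
  simp [glB_left, em, Pi.single_apply]

/-- The Graham–Lehrer form as a bundled bilinear map. -/
def glLin (d : ℕ) [NeZero d] (z : kk) : VV d →ₗ[kk] VV d →ₗ[kk] kk :=
  LinearMap.mk₂ kk (glB d z)
    (fun v v' w => by simp [glB, add_mul, Finset.sum_add_distrib])
    (fun c v w => by simp [glB, Finset.mul_sum, mul_assoc])
    (fun v w w' => by simp [glB, add_mul, mul_add, Finset.sum_add_distrib])
    (fun c v w => by simp [glB, Finset.mul_sum, mul_assoc, mul_left_comm])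

/-- with `z = (-q)^d`, the Graham–Lehrer form pairs `n_+` and `n_-`
trivially with everything, hence descends to a pairing `L̂⁺_{d,λ} × L̂⁻_{d,λ} → k`,
and the induced pairing is perfect. -/
theorem statement14 (d : ℕ) [NeZero d] (hd : 3 ≤ d) (l : kkˣ) :
    (∀ m' : VV d, glB d ((-qq) ^ d) (nPlus d) m' = 0) ∧
    (∀ m : VV d, glB d ((-qq) ^ d) m (nMinus d) = 0) ∧
    (∃ Bq : LPlus d →ₗ[kk] LMinus d →ₗ[kk] kk,
        (∀ v w : VV d, Bq (mkP d v) (mkM d w) = glB d ((-qq) ^ d) v w) ∧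
        (∀ x : LPlus d, (∀ y : LMinus d, Bq x y = 0) → x = 0) ∧
        (∀ y : LMinus d, (∀ x : LPlus d, Bq x y = 0) → y = 0)) := by
  have hq : (-qq) ≠ 0 := neg_ne_zero.2 qq_ne_zero
  have hqi : (-qq)⁻¹ ≠ 0 := inv_ne_zero hq
  have hpow : (-qq) ^ (2 * d) ≠ 1 := by
    rw [(even_two_mul d).neg_pow]
    exact qq_pow_ne_one _ (by omega)
  have hpowi : (-qq)⁻¹ ^ (2 * d) ≠ 1 := by rwa [inv_pow, Ne, inv_eq_one]
  have hs : (-qq) + (-qq)⁻¹ = -(qq + qq⁻¹) := by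
    have h : (-qq)⁻¹ = -qq⁻¹ :=
      inv_eq_of_mul_eq_one_right (by rw [neg_mul_neg, mul_inv_cancel₀ qq_ne_zero])
    rw [h]
    ring
  have hsi : (-qq)⁻¹ + (-qq)⁻¹⁻¹ = -(qq + qq⁻¹) := by rw [inv_inv, add_comm, hs]
  have hz : (((-qq)⁻¹) ^ d)⁻¹ = (-qq) ^ d := by rw [inv_pow, inv_inv]
  have hP : ∀ m' : VV d, glB d ((-qq) ^ d) (nPlus d) m' = 0 := by
    intro m'
    rw [glB_left, nPlus_eq, ← hz]
    simp [-inv_pow, nVec_radical d hd hqi hsi]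
  have hM : ∀ m : VV d, glB d ((-qq) ^ d) m (nMinus d) = 0 := by
    intro m
    rw [glB_swap d hd, glB_left, nMinus_eq]
    simp [-inv_pow, nVec_radical d hd hq hs]
  have hkM : NMinus d ≤ LinearMap.ker (glLin d ((-qq) ^ d)).flip := by
    rw [NMinus, Submodule.span_singleton_le_iff_mem, LinearMap.mem_ker]
    exact LinearMap.ext hM
  have hkP : NPlus d ≤ LinearMap.ker ((NMinus d).liftQ _ hkM).flip := by
    rw [NPlus, Submodule.span_singleton_le_iff_mem, LinearMap.mem_ker]
    refine LinearMap.ext fun y => ?_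
    obtain ⟨w, rfl⟩ := (NMinus d).mkQ_surjective y
    exact hP w
  have hB : ∀ v w : VV d, (NPlus d).liftQ _ hkP (mkP d v) (mkM d w) = glB d ((-qq) ^ d) v w :=
    fun v w => rfl
  refine ⟨hP, hM, (NPlus d).liftQ _ hkP, hB, ?_, ?_⟩
  · intro x hx
    obtain ⟨v, rfl⟩ := (NPlus d).mkQ_surjective x
    rw [Submodule.mkQ_apply, Submodule.Quotient.mk_eq_zero, NPlus, nPlus_eq]
    refine mem_span_of_radical d hd hqi hsi hpowi v fun j => ?_
    rw [hz, ← glB_em]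
    exact hx (mkM d (em d j))
  · intro y hy
    obtain ⟨w, rfl⟩ := (NMinus d).mkQ_surjective y
    rw [Submodule.mkQ_apply, Submodule.Quotient.mk_eq_zero, NMinus, nMinus_eq]
    refine mem_span_of_radical d hd hq hs hpow w fun j => ?_
    rw [← glB_em, ← glB_swap d hd]
    exact hy (mkP d (em d j))

end PaperEval
end
end
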